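/- Let ρ ∈ (0, 1), σ₀ ∈ (0, 1), t₀ > 1, and let λ₁ > 1 satisfy λ₁^{σ₀} ≥ 5 Γ(1−ρ). Then the function σ ↦ E_ρ(−λ₁^σ t₀^ρ) is strictly monotonically decreasing with respect to σ on the interval [σ₀, 1). -/

import Mathlib

open Set Real

/-- The Mittag-Leffler function `E_ρ(z) = ∑_{k=0}^∞ z^k / Γ(ρk + 1)`. -/
noncomputable def mittagLeffler (ρ z : ℝ) : ℝ := ∑' k : ℕ, z ^ k / Real.Gamma (ρ * k + 1)

open MeasureTheory Filter Topology

lemma gamma_lower {A s : ℝ} (hA : 0 < A) (hs : 1 ≤ s) :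
    exp (-A) * A ^ (s - 1) ≤ Real.Gamma s := by
  rw [Real.Gamma_eq_integral (by linarith)]
  have hi := Real.GammaIntegral_convergent (s := s) (by linarith)
  have hsub : Ioi A ⊆ Ioi (0 : ℝ) := Ioi_subset_Ioi hA.le
  calc exp (-A) * A ^ (s - 1) = ∫ x in Ioi A, exp (-x) * A ^ (s - 1) := by
        rw [integral_mul_const, integral_exp_neg_Ioi]
    _ ≤ ∫ x in Ioi A, exp (-x) * x ^ (s - 1) := by
        apply setIntegral_mono_on
        · exact (integrableOn_exp_neg_Ioi A).mul_const _
        · exact hi.mono_set hsub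
        · exact measurableSet_Ioi
        · intro x hx
          have : A ≤ x := le_of_lt hx
          have h0 : 0 ≤ s - 1 := by linarith
          gcongr
    _ ≤ _ := by
        apply setIntegral_mono_set hi
        · filter_upwards [ae_restrict_mem measurableSet_Ioi] with x hx
          have : (0:ℝ) < x := hx
          simp only [Pi.zero_apply]
          positivity
        · exact hsub.eventuallyLE

lemma summable_ml {ρ c : ℝ} (hρ : 0 < ρ) (hc : 0 < c) {R : ℝ} (hR : 0 ≤ R) :
    Summable (fun k : ℕ => R ^ k / Real.Gamma (ρ * k + c)) := by
  set B : ℝ := 2 * R + 1 with hB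
  have hB0 : 0 < B := by positivity
  set A : ℝ := B ^ (1 / ρ) with hAdef
  have hA : 0 < A := by positivity
  have hAB : A ^ ρ = B := by
    rw [hAdef, ← rpow_mul hB0.le, one_div, inv_mul_cancel₀ hρ.ne', rpow_one]
  have hgeo : Summable (fun k : ℕ => (exp A * A ^ (1 - c)) * (R / B) ^ k) := by
    apply Summable.mul_left
    apply summable_geometric_of_lt_one (by positivity)
    rw [div_lt_one hB0]; linarith
  obtain ⟨N, hN⟩ := exists_nat_ge (1 / ρ)
  rw [← summable_nat_add_iff N]
  refine Summable.of_nonneg_of_le ?_ ?_ ((summable_nat_add_iff N).2 hgeo)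
  · intro k
    have : 0 < Real.Gamma (ρ * ((k + N : ℕ) : ℝ) + c) := Real.Gamma_pos_of_pos (by positivity)
    positivity
  · intro k
    have h1 : 1 ≤ ρ * ((k + N : ℕ) : ℝ) + c := by
      have : 1 ≤ ρ * N := by rw [div_le_iff₀ hρ] at hN; linarith
      push_cast
      have : 0 ≤ ρ * k := by positivity
      nlinarith
    have h2 := gamma_lower hA h1
    generalize k + N = m at *
    have h3 : A ^ (ρ * (m : ℝ) + c - 1) = B ^ m * (A ^ (1 - c))⁻¹ := by
      rw [← hAB, ← rpow_natCast, ← rpow_mul hA.le, ← rpow_neg hA.le, ← rpow_add hA]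
      congr 1; ring
    calc R ^ m / Real.Gamma (ρ * m + c) ≤ R ^ m / (exp (-A) * A ^ (ρ * (m : ℝ) + c - 1)) := by
          gcongr
      _ = _ := by
          rw [h3, exp_neg, div_pow]; field_simp

lemma beta_int {a b t : ℝ} (ha : 0 < a) (hb : 0 < b) (ht : 0 < t) :
    ∫ s in (0:ℝ)..t, s ^ (a - 1) * (t - s) ^ (b - 1) =
      t ^ (a + b - 1) * (Real.Gamma a * Real.Gamma b / Real.Gamma (a + b)) := by
  have h := Complex.betaIntegral_scaled a b ht
  rw [Complex.betaIntegral_eq_Gamma_mul_div _ _ (by simpa) (by simpa)] at h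
  have e : ∫ x in (0:ℝ)..t, (x : ℂ) ^ ((a : ℂ) - 1) * ((t : ℂ) - x) ^ ((b : ℂ) - 1) =
      ∫ x in (0:ℝ)..t, ((x ^ (a - 1) * (t - x) ^ (b - 1) : ℝ) : ℂ) := by
    apply intervalIntegral.integral_congr
    intro x hx
    rw [uIcc_of_le ht.le] at hx
    have h1 : 0 ≤ t - x := by linarith [hx.2]
    simp only
    rw [Complex.ofReal_mul, Complex.ofReal_cpow hx.1, Complex.ofReal_cpow h1]
    push_cast
    rfl
  rw [e, intervalIntegral.integral_ofReal] at h
  apply Complex.ofReal_injective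
  rw [h]
  push_cast [Complex.ofReal_cpow ht.le, Complex.Gamma_ofReal]
  rw [← Complex.ofReal_add, Complex.Gamma_ofReal]

lemma beta_integrable {a b t : ℝ} (ha : 0 < a) (hb : 0 < b) (ht : 0 < t) :
    IntervalIntegrable (fun s => s ^ (a - 1) * (t - s) ^ (b - 1)) volume 0 t := by
  apply intervalIntegral.intervalIntegrable_of_integral_ne_zero
  rw [beta_int ha hb ht]
  have := Real.Gamma_pos_of_pos ha
  have := Real.Gamma_pos_of_pos hb
  have := Real.Gamma_pos_of_pos (add_pos ha hb)
  positivity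

noncomputable def mlg (ρ x : ℝ) : ℝ := ∑' k : ℕ, (-x) ^ k / Real.Gamma (ρ * k + ρ)

noncomputable def mlu (ρ s : ℝ) : ℝ := s ^ (ρ - 1) * mlg ρ (s ^ ρ)

lemma hasSum_mlg {ρ x : ℝ} (hρ : 0 < ρ) :
    HasSum (fun k : ℕ => (-x) ^ k / Real.Gamma (ρ * k + ρ)) (mlg ρ x) := by
  apply Summable.hasSum
  apply Summable.of_norm
  convert summable_ml hρ hρ (abs_nonneg x) using 2 with k
  have : 0 < Real.Gamma (ρ * k + ρ) := Real.Gamma_pos_of_pos (by positivity)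
  rw [norm_div, norm_pow, norm_neg, Real.norm_eq_abs, Real.norm_eq_abs, abs_of_pos this]

lemma continuous_mlg {ρ : ℝ} (hρ : 0 < ρ) : Continuous (mlg ρ) := by
  rw [continuous_iff_continuousAt]
  intro x
  have : ContinuousOn (mlg ρ) (Metric.ball 0 (|x| + 1)) := by
    apply continuousOn_tsum (u := fun k : ℕ => (|x| + 1) ^ k / Real.Gamma (ρ * k + ρ))
    · intro k; fun_prop
    · exact summable_ml hρ hρ (by positivity)
    · intro k y hy
      have : 0 < Real.Gamma (ρ * k + ρ) := Real.Gamma_pos_of_pos (by positivity)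
      rw [norm_div, norm_pow, norm_neg, Real.norm_eq_abs (Real.Gamma _), abs_of_pos this]
      have : ‖y‖ ≤ |x| + 1 := by simpa using (mem_ball_zero_iff.1 hy).le
      gcongr
  exact this.continuousAt (Metric.isOpen_ball.mem_nhds (by simp))

lemma conv_integrable {ρ b t : ℝ} (hρ : 0 < ρ) (hb : 0 < b) (ht : 0 < t) :
    IntervalIntegrable (fun s => mlu ρ s * (t - s) ^ (b - 1)) volume 0 t := by
  have h := (beta_integrable hρ hb ht).mul_continuousOn (g := fun s => mlg ρ (s ^ ρ))
    ((continuous_mlg hρ).comp (continuous_id.rpow_const (fun _ => Or.inr hρ.le))).continuousOn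
  refine h.congr ?_
  intro s _
  simp only [mlu]; ring

lemma conv_hasSum {ρ b t : ℝ} (hρ : 0 < ρ) (hb : 0 < b) (ht : 0 < t) :
    HasSum (fun k : ℕ => (-1) ^ k * t ^ (ρ * k + ρ + b - 1) *
      (Real.Gamma b / Real.Gamma (ρ * k + ρ + b)))
      (∫ s in (0:ℝ)..t, mlu ρ s * (t - s) ^ (b - 1)) := by
  have key := intervalIntegral.hasSum_integral_of_dominated_convergence (μ := volume) (a := 0) (b := t)
    (F := fun (k : ℕ) s => (-1) ^ k / Real.Gamma (ρ * k + ρ) *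
      (s ^ (ρ * k + ρ - 1) * (t - s) ^ (b - 1)))
    (f := fun s => mlu ρ s * (t - s) ^ (b - 1))
    (fun (k : ℕ) s => (t ^ ρ) ^ k / Real.Gamma (ρ * k + ρ) * (s ^ (ρ - 1) * (t - s) ^ (b - 1)))
    ?_ ?_ ?_ ?_ ?_
  · refine (congrArg (HasSum · _) (funext fun k => ?_)).mpr key
    have hk : 0 < ρ * k + ρ := by positivity
    have := Real.Gamma_pos_of_pos hk
    rw [intervalIntegral.integral_const_mul, beta_int hk hb ht]
    field_simp
  · intro k
    have hk : 0 < ρ * k + ρ := by positivity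
    have := ((beta_integrable hk hb ht).const_mul ((-1) ^ k / Real.Gamma (ρ * k + ρ))).def'
    exact this.aestronglyMeasurable
  · intro k
    refine ae_of_all _ fun s hs => ?_
    rw [uIoc_of_le ht.le] at hs
    have hs0 : 0 < s := hs.1
    have hts : 0 ≤ t - s := by linarith [hs.2]
    have hst : s ≤ t := hs.2
    have hk : 0 < ρ * k + ρ := by positivity
    have := Real.Gamma_pos_of_pos hk
    have e : s ^ (ρ * k + ρ - 1) = (s ^ ρ) ^ k * s ^ (ρ - 1) := by
      rw [← rpow_natCast, ← rpow_mul hs0.le, ← rpow_add hs0]; congr 1; ring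
    rw [e, norm_mul, norm_div, norm_pow, norm_neg, norm_one, one_pow, Real.norm_of_nonneg this.le,
      Real.norm_of_nonneg (by positivity)]
    calc 1 / Real.Gamma (ρ * k + ρ) * ((s ^ ρ) ^ k * s ^ (ρ - 1) * (t - s) ^ (b - 1))
        = (s ^ ρ) ^ k / Real.Gamma (ρ * k + ρ) * (s ^ (ρ - 1) * (t - s) ^ (b - 1)) := by ring
      _ ≤ _ := by gcongr
  · refine ae_of_all _ fun s hs => ?_
    exact (summable_ml hρ hρ (by positivity)).mul_right _
  · simp_rw [tsum_mul_right]
    exact (beta_integrable hρ hb ht).const_mul _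
  · refine ae_of_all _ fun s hs => ?_
    rw [uIoc_of_le ht.le] at hs
    have hs0 : 0 < s := hs.1
    have h := ((hasSum_mlg (x := s ^ ρ) hρ).mul_left (s ^ (ρ - 1))).mul_right ((t - s) ^ (b - 1))
    refine (congrArg (HasSum · _) (funext fun k => ?_)).mpr h
    have e : s ^ (ρ * k + ρ - 1) = (s ^ ρ) ^ k * s ^ (ρ - 1) := by
      rw [← rpow_natCast, ← rpow_mul hs0.le, ← rpow_add hs0]; congr 1; ring
    rw [e, neg_pow (s ^ ρ)]
    ring

lemma mlu_integral {ρ t : ℝ} (hρ : 0 < ρ) (ht : 0 < t) :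
    ∫ s in (0:ℝ)..t, mlu ρ s = 1 - mittagLeffler ρ (-(t ^ ρ)) := by
  have h := conv_hasSum hρ one_pos ht
  simp only [sub_self, rpow_zero, mul_one, Real.Gamma_one] at h
  have hs : Summable (fun k : ℕ => (-(t ^ ρ)) ^ k / Real.Gamma (ρ * k + 1)) := by
    apply Summable.of_norm
    convert summable_ml hρ one_pos (by positivity : 0 ≤ t ^ ρ) using 2 with k
    have : 0 < Real.Gamma (ρ * k + 1) := Real.Gamma_pos_of_pos (by positivity)
    rw [norm_div, norm_pow, norm_neg, Real.norm_of_nonneg this.le,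
      Real.norm_of_nonneg (by positivity)]
  rw [mittagLeffler, hs.tsum_eq_zero_add, ← h.tsum_eq]
  simp only [pow_zero, Nat.cast_zero, mul_zero, zero_add, Real.Gamma_one, div_one]
  rw [sub_add_cancel_left, ← tsum_neg]
  congr 1 with k
  have e : t ^ (ρ * k + ρ + 1 - 1) = (t ^ ρ) ^ (k + 1) := by
    rw [← rpow_natCast, ← rpow_mul ht.le]; congr 1; push_cast; ring
  rw [e, neg_pow (t ^ ρ), pow_succ (-1 : ℝ)]
  push_cast
  rw [show ρ * ((k : ℝ) + 1) + 1 = ρ * k + ρ + 1 by ring]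
  ring

lemma mlu_volterra {ρ t : ℝ} (hρ : 0 < ρ) (ht : 0 < t) :
    ∫ s in (0:ℝ)..t, mlu ρ s * (t - s) ^ (ρ - 1) = t ^ (ρ - 1) - Real.Gamma ρ * mlu ρ t := by
  have h := conv_hasSum hρ hρ ht
  have hG := Real.Gamma_pos_of_pos hρ
  have hs := hasSum_mlg (x := t ^ ρ) hρ
  rw [mlu, ← hs.tsum_eq, hs.summable.tsum_eq_zero_add, ← h.tsum_eq]
  simp only [pow_zero, Nat.cast_zero, mul_zero, zero_add]
  rw [mul_add, mul_add, show Real.Gamma ρ * (t ^ (ρ - 1) * (1 / Real.Gamma ρ)) = t ^ (ρ - 1) by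
    field_simp, sub_add_cancel_left, ← tsum_mul_left, ← tsum_mul_left, ← tsum_neg]
  congr 1 with k
  have e : t ^ (ρ * k + ρ + ρ - 1) = (t ^ ρ) ^ (k + 1) * t ^ (ρ - 1) := by
    rw [← rpow_natCast, ← rpow_mul ht.le, ← rpow_add ht]; congr 1; push_cast; ring
  rw [e, neg_pow (t ^ ρ), pow_succ (-1 : ℝ)]
  push_cast
  rw [show ρ * ((k : ℝ) + 1) + ρ = ρ * k + ρ + ρ by ring]
  ring

lemma mlg_pos {ρ : ℝ} (hρ : 0 < ρ) (hρ' : ρ < 1) {x : ℝ} (hx : 0 ≤ x) : 0 < mlg ρ x := by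
  have hG := Real.Gamma_pos_of_pos hρ
  have hg0 : 0 < mlg ρ 0 := by
    have : mlg ρ 0 = 1 / Real.Gamma ρ := by
      rw [mlg, tsum_eq_single 0]
      · simp
      · intro k hk; simp [hk]
    rw [this]; positivity
  have hcont := continuous_mlg hρ
  by_contra hneg
  push Not at hneg
  set S : Set ℝ := {y | 0 ≤ y ∧ mlg ρ y ≤ 0} with hS
  have hSne : S.Nonempty := ⟨x, hx, hneg⟩
  have hSb : BddBelow S := ⟨0, fun y hy => hy.1⟩
  have hScl : IsClosed S :=
    (isClosed_le continuous_const continuous_id).inter (isClosed_le hcont continuous_const)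
  obtain ⟨hx1, hx1'⟩ := hScl.csInf_mem hSne hSb
  set x₁ := sInf S with hx₁
  have hbelow : ∀ y, 0 ≤ y → y < x₁ → 0 < mlg ρ y := by
    intro y hy hyx
    by_contra hc
    push Not at hc
    exact absurd (csInf_le hSb (show y ∈ S from ⟨hy, hc⟩)) (not_le.2 hyx)
  have hx1pos : 0 < x₁ := by
    rcases hx1.lt_or_eq with h | h
    · exact h
    · rw [← h] at hx1'; linarith
  set t₁ := x₁ ^ (1 / ρ) with ht₁
  have ht1 : 0 < t₁ := by positivity
  have ht1ρ : t₁ ^ ρ = x₁ := by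
    rw [ht₁, ← rpow_mul hx1pos.le, one_div, inv_mul_cancel₀ hρ.ne', rpow_one]
  have hupos : ∀ s, 0 < s → s < t₁ → 0 < mlu ρ s := by
    intro s hs hst
    have := hbelow (s ^ ρ) (by positivity) (by rw [← ht1ρ]; gcongr)
    rw [mlu]; positivity
  have hu1 : mlu ρ t₁ ≤ 0 := by
    rw [mlu, ht1ρ]
    exact mul_nonpos_of_nonneg_of_nonpos (by positivity) hx1'
  have hucont : ContinuousOn (mlu ρ) (Ioi 0) := by
    intro s hs
    have hs' : s ≠ 0 := ne_of_gt hs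
    apply ContinuousAt.continuousWithinAt
    exact (continuousAt_rpow_const _ _ (Or.inl hs')).mul
      (hcont.continuousAt.comp (continuousAt_rpow_const _ _ (Or.inl hs')))
  obtain ⟨δ, hδ0, hδt, hδ⟩ : ∃ δ : ℝ, 0 < δ ∧ δ < t₁ / 2 ∧
      δ ^ ρ / ρ < (1 / 2) ^ (1 - ρ) * Real.Gamma ρ := by
    have hlim : Tendsto (fun d : ℝ => d ^ ρ / ρ) (𝓝[>] 0) (𝓝 0) := by
      have : ContinuousAt (fun d : ℝ => d ^ ρ / ρ) 0 :=
        (continuousAt_rpow_const _ _ (Or.inr hρ.le)).div_const _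
      have h2 := this.tendsto
      simp only [zero_rpow hρ.ne', zero_div] at h2
      exact h2.mono_left nhdsWithin_le_nhds
    have h1 := hlim.eventually_lt_const (show 0 < (1 / 2 : ℝ) ^ (1 - ρ) * Real.Gamma ρ by positivity)
    have h2 : ∀ᶠ d : ℝ in 𝓝[>] 0, d ∈ Ioo 0 (t₁ / 2) := Ioo_mem_nhdsGT (by positivity)
    obtain ⟨d, hd1, hd2⟩ := (h1.and h2).exists
    exact ⟨d, hd2.1, hd2.2, hd1⟩
  obtain ⟨t₀, ⟨ht0a, ht0b⟩, hmax⟩ := isCompact_Icc.exists_isMaxOn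
    (nonempty_Icc.2 (show t₁ - δ ≤ t₁ by linarith))
    (hucont.mono (fun s hs => show 0 < s by linarith [hs.1]))
  have hmax' : ∀ s, t₁ - δ ≤ s → s ≤ t₁ → mlu ρ s ≤ mlu ρ t₀ := fun s h1 h2 => hmax ⟨h1, h2⟩
  have hut0 : 0 < mlu ρ t₀ :=
    lt_of_lt_of_le (hupos (t₁ - δ) (by linarith) (by linarith)) (hmax' _ le_rfl (by linarith))
  have ht01 : t₀ < t₁ := by
    rcases ht0b.lt_or_eq with h | h
    · exact h
    · rw [h] at hut0; linarith
  have ht0 : 0 < t₀ := by linarith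
  have V1 := mlu_volterra hρ ht1
  have V0 := mlu_volterra hρ ht0
  have I1 := conv_integrable hρ hρ ht1
  have I0 := conv_integrable hρ hρ ht0
  have I1a : IntervalIntegrable (fun s => mlu ρ s * (t₁ - s) ^ (ρ - 1)) volume 0 t₀ :=
    I1.mono_set (by rw [uIcc_of_le ht0.le, uIcc_of_le ht1.le]; exact Icc_subset_Icc_right ht01.le)
  have I1b : IntervalIntegrable (fun s => mlu ρ s * (t₁ - s) ^ (ρ - 1)) volume t₀ t₁ :=
    I1.mono_set (by rw [uIcc_of_le ht01.le, uIcc_of_le ht1.le]; exact Icc_subset_Icc_left ht0.le)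
  rw [← intervalIntegral.integral_add_adjacent_intervals I1a I1b] at V1
  set q := (t₁ / t₀) ^ (ρ - 1) with hq
  have hq0 : 0 < q := by positivity
  have hqt : q * t₀ ^ (ρ - 1) = t₁ ^ (ρ - 1) := by
    rw [hq, ← mul_rpow (by positivity) ht0.le, div_mul_cancel₀ _ ht0.ne']
  have B1 : ∫ s in (0:ℝ)..t₀, mlu ρ s * (t₁ - s) ^ (ρ - 1) ≤
      ∫ s in (0:ℝ)..t₀, q * (mlu ρ s * (t₀ - s) ^ (ρ - 1)) := by
    apply intervalIntegral.integral_mono_on_of_le_Ioo ht0.le I1a (I0.const_mul q)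
    intro s hs
    have hs0 := hs.1
    have hs1 : 0 < t₀ - s := by linarith [hs.2]
    have h1 : (t₁ - s) ^ (ρ - 1) ≤ q * (t₀ - s) ^ (ρ - 1) := by
      rw [hq, ← mul_rpow (by positivity) hs1.le]
      apply rpow_le_rpow_of_nonpos (by positivity) _ (by linarith)
      rw [div_mul_eq_mul_div, div_le_iff₀ ht0]
      nlinarith
    have := hupos s hs0 (by linarith [hs.2])
    calc mlu ρ s * (t₁ - s) ^ (ρ - 1) ≤ mlu ρ s * (q * (t₀ - s) ^ (ρ - 1)) := by gcongr
      _ = _ := by ring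
  rw [intervalIntegral.integral_const_mul, V0] at B1
  have hint : ∫ s in t₀..t₁, (t₁ - s) ^ (ρ - 1) = (t₁ - t₀) ^ ρ / ρ := by
    rw [intervalIntegral.integral_comp_sub_left (fun y => y ^ (ρ - 1)), sub_self,
      integral_rpow (Or.inl (by linarith))]
    simp [zero_rpow hρ.ne']
  have J : IntervalIntegrable (fun s => mlu ρ t₀ * (t₁ - s) ^ (ρ - 1)) volume t₀ t₁ := by
    apply IntervalIntegrable.const_mul
    apply intervalIntegral.intervalIntegrable_of_integral_ne_zero
    rw [hint]
    have : 0 < t₁ - t₀ := by linarith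
    positivity
  have B2 : ∫ s in t₀..t₁, mlu ρ s * (t₁ - s) ^ (ρ - 1) ≤
      ∫ s in t₀..t₁, mlu ρ t₀ * (t₁ - s) ^ (ρ - 1) := by
    apply intervalIntegral.integral_mono_on ht01.le I1b J
    intro s hs
    have : 0 ≤ t₁ - s := by linarith [hs.2]
    have := hmax' s (by linarith [hs.1]) hs.2
    gcongr
  rw [intervalIntegral.integral_const_mul, hint] at B2
  have B3 : (t₁ - t₀) ^ ρ / ρ ≤ δ ^ ρ / ρ := by
    have : 0 ≤ t₁ - t₀ := by linarith
    have : t₁ - t₀ ≤ δ := by linarith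
    gcongr
  have B4 : (1 / 2 : ℝ) ^ (1 - ρ) ≤ q := by
    have : q = (t₀ / t₁) ^ (1 - ρ) := by
      rw [hq, ← neg_sub 1 ρ, rpow_neg (by positivity), ← inv_rpow (by positivity), inv_div]
    rw [this]
    have h1 : 1 / 2 ≤ t₀ / t₁ := by rw [div_le_div_iff₀ (by norm_num) ht1]; linarith
    have h2 : 0 ≤ 1 - ρ := by linarith
    gcongr
  have B5 : (t₁ - t₀) ^ ρ / ρ < q * Real.Gamma ρ := by
    have : (1 / 2 : ℝ) ^ (1 - ρ) * Real.Gamma ρ ≤ q * Real.Gamma ρ := by gcongr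
    linarith
  have B6 := mul_lt_mul_of_pos_left B5 hut0
  have B7 : Real.Gamma ρ * mlu ρ t₁ ≤ 0 := mul_nonpos_of_nonneg_of_nonpos hG.le hu1
  rw [mul_sub, hqt] at B1
  linarith

lemma ml_strictAnti {ρ : ℝ} (hρ : 0 < ρ) (hρ' : ρ < 1) {a b : ℝ} (ha : 0 < a) (hab : a < b) :
    mittagLeffler ρ (-(b ^ ρ)) < mittagLeffler ρ (-(a ^ ρ)) := by
  have hb : 0 < b := ha.trans hab
  have I : ∀ t, 0 < t → IntervalIntegrable (mlu ρ) volume 0 t := by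
    intro t ht
    have := conv_integrable hρ one_pos ht
    simpa using this
  have I2 : IntervalIntegrable (mlu ρ) volume a b := (I a ha).symm.trans (I b hb)
  have h1 := mlu_integral hρ ha
  have h2 := mlu_integral hρ hb
  have h3 := intervalIntegral.integral_add_adjacent_intervals (I a ha) I2
  have h4 : 0 < ∫ s in a..b, mlu ρ s := by
    apply intervalIntegral.intervalIntegral_pos_of_pos_on I2 _ hab
    intro s hs
    have hs0 : 0 < s := ha.trans hs.1
    have := mlg_pos hρ hρ' (x := s ^ ρ) (by positivity)
    rw [mlu]; positivity
  linarith

/-- For `ρ ∈ (0,1)`, `σ₀ ∈ (0,1)`, `t₀ > 1` and `λ₁ > 1` with `λ₁^{σ₀} ≥ 5Γ(1−ρ)`, the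
function `σ ↦ E_ρ(−λ₁^σ t₀^ρ)` is strictly monotonically decreasing on `[σ₀, 1)`. -/
theorem stmt10 (ρ σ₀ t₀ lam₁ : ℝ) (hρ : 0 < ρ) (hρ' : ρ < 1) (hσ₀ : 0 < σ₀) (hσ₀' : σ₀ < 1)
    (ht₀ : 1 < t₀) (hlam₁ : 1 < lam₁) (h : 5 * Real.Gamma (1 - ρ) ≤ lam₁ ^ σ₀) :
    StrictAntiOn (fun σ : ℝ => mittagLeffler ρ (-(lam₁ ^ σ * t₀ ^ ρ))) (Set.Ico σ₀ 1) := by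
  intro σ _ τ _ hστ
  have hl : 0 < lam₁ := by linarith
  have ht : 0 < t₀ := by linarith
  have e : ∀ r : ℝ, lam₁ ^ r * t₀ ^ ρ = (lam₁ ^ (r / ρ) * t₀) ^ ρ := by
    intro r
    rw [mul_rpow (by positivity) ht.le, ← rpow_mul hl.le, div_mul_cancel₀ _ hρ.ne']
  simp only [e]
  apply ml_strictAnti hρ hρ' (by positivity)
  gcongr
  exact rpow_lt_rpow_of_exponent_lt hlam₁ (by gcongr)
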